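/- arXiv:2009.00052 — 3 statements merged into one kernel-verified Lean document; each statement's English description precedes it below -/
import Mathlib

section
/- Almost surely, e^{−2α t} ∫_0^t e^{2α s} ζ_s² ds → (α/2) · Z_∞² as t → ∞, where ζ_s := e^{−α s} B_s + α Z_s. -/
open MeasureTheory ProbabilityTheory Filter

lemma aux_kron (α : ℝ) (hα : 0 < α) (h : ℝ → ℝ) (hint : IntegrableOn h (Set.Ioi 0)) :
    Tendsto (fun t : ℝ => Real.exp (-2 * α * t) * ∫ s in (0:ℝ)..t, Real.exp (2 * α * s) * h s)
      atTop (nhds 0) := by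
  have key : Tendsto (fun t : ℝ => ∫ s in Set.Ioi (0:ℝ),
      (Set.Ioc 0 t).indicator (fun s => Real.exp (-2 * α * (t - s)) * h s) s) atTop
      (nhds (∫ s in Set.Ioi (0:ℝ), (0:ℝ))) := by
    apply tendsto_integral_filter_of_dominated_convergence (fun s => |h s|)
    · refine Eventually.of_forall fun t => ?_
      apply AEStronglyMeasurable.indicator _ measurableSet_Ioc
      exact (Continuous.aestronglyMeasurable (by fun_prop)).mul hint.aestronglyMeasurable
    · refine Eventually.of_forall fun t => Eventually.of_forall fun s => ?_
      by_cases hs : s ∈ Set.Ioc 0 t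
      · rw [Set.indicator_of_mem hs, Real.norm_eq_abs, abs_mul, Real.abs_exp]
        have : Real.exp (-2 * α * (t - s)) ≤ 1 := by
          rw [Real.exp_le_one_iff]
          nlinarith [hs.2, mul_nonneg hα.le (sub_nonneg.2 hs.2)]
        nlinarith [abs_nonneg (h s)]
      · rw [Set.indicator_of_notMem hs]; simp
    · exact hint.abs
    · refine Eventually.of_forall fun s => ?_
      have h1 : Tendsto (fun t : ℝ => Real.exp (-2 * α * (t - s)) * h s) atTop (nhds 0) := by
        have : Tendsto (fun t : ℝ => Real.exp (-2 * α * (t - s))) atTop (nhds 0) := by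
          apply Real.tendsto_exp_atBot.comp
          apply Tendsto.const_mul_atTop_of_neg (by linarith)
          exact tendsto_atTop_add_const_right _ _ tendsto_id
        simpa using this.mul_const (h s)
      rw [tendsto_zero_iff_norm_tendsto_zero] at h1
      apply squeeze_zero_norm _ h1
      intro t
      exact norm_indicator_le_norm_self _ _
  simp only [integral_zero] at key
  refine key.congr' ?_
  filter_upwards [eventually_ge_atTop 0] with t ht
  rw [integral_indicator measurableSet_Ioc, Measure.restrict_restrict measurableSet_Ioc,
    Set.inter_eq_left.2 Set.Ioc_subset_Ioi_self, ← intervalIntegral.integral_of_le ht,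
    ← intervalIntegral.integral_const_mul]
  congr 1; ext s
  rw [← mul_assoc, ← Real.exp_add]; ring_nf

lemma aux_lim (α : ℝ) (hα : 0 < α) (z : ℝ → ℝ) (hz : Continuous z) (C zi : ℝ)
    (hC : ∀ s, 0 ≤ s → |z s| ≤ C) (hl : Tendsto z atTop (nhds zi)) :
    Tendsto (fun t : ℝ => Real.exp (-2 * α * t) * ∫ s in (0:ℝ)..t, Real.exp (2 * α * s) * z s)
      atTop (nhds (zi / (2 * α))) := by
  have hi : IntegrableOn (fun s => Real.exp (-(2 * α) * s)) (Set.Ioi 0) :=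
    integrableOn_exp_mul_Ioi (by linarith) 0
  have key : Tendsto (fun t : ℝ => ∫ s in Set.Ioi (0:ℝ),
      (Set.Ioc 0 t).indicator (fun s => Real.exp (-(2 * α) * s) * z (t - s)) s) atTop
      (nhds (∫ s in Set.Ioi (0:ℝ), Real.exp (-(2 * α) * s) * zi)) := by
    apply tendsto_integral_filter_of_dominated_convergence
      (fun s => Real.exp (-(2 * α) * s) * C)
    · refine Eventually.of_forall fun t => ?_
      apply AEStronglyMeasurable.indicator _ measurableSet_Ioc
      exact (Continuous.aestronglyMeasurable (by fun_prop))
    · refine Eventually.of_forall fun t => Eventually.of_forall fun s => ?_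
      have hC0 : 0 ≤ C := (abs_nonneg _).trans (hC 0 le_rfl)
      by_cases hs : s ∈ Set.Ioc 0 t
      · rw [Set.indicator_of_mem hs, Real.norm_eq_abs, abs_mul, Real.abs_exp]
        have := hC (t - s) (sub_nonneg.2 hs.2)
        gcongr
      · rw [Set.indicator_of_notMem hs]; simp; positivity
    · exact hi.mul_const C
    · filter_upwards [ae_restrict_mem measurableSet_Ioi] with s hs
      have h1 : Tendsto (fun t : ℝ => Real.exp (-(2 * α) * s) * z (t - s)) atTop
          (nhds (Real.exp (-(2 * α) * s) * zi)) := by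
        apply Tendsto.const_mul
        apply hl.comp
        exact tendsto_atTop_add_const_right _ _ tendsto_id
      refine h1.congr' ?_
      filter_upwards [eventually_ge_atTop s] with t ht
      rw [Set.indicator_of_mem]
      exact ⟨hs, ht⟩
  have e : ∫ s in Set.Ioi (0:ℝ), Real.exp (-(2 * α) * s) * zi = zi / (2 * α) := by
    rw [integral_mul_const, integral_exp_mul_Ioi (by linarith)]
    simp; field_simp
  rw [e] at key
  refine key.congr' ?_
  filter_upwards [eventually_ge_atTop 0] with t ht
  rw [integral_indicator measurableSet_Ioc, Measure.restrict_restrict measurableSet_Ioc,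
    Set.inter_eq_left.2 Set.Ioc_subset_Ioi_self, ← intervalIntegral.integral_of_le ht,
    ← intervalIntegral.integral_const_mul]
  have := intervalIntegral.integral_comp_sub_left (a := 0) (b := t)
    (fun s => Real.exp (-2 * α * t) * (Real.exp (2 * α * s) * z s)) t
  simp only [sub_self, sub_zero] at this
  rw [← this]
  congr 1; ext s
  rw [← mul_assoc, ← Real.exp_add]; ring_nf

lemma aux_det (α : ℝ) (hα : 0 < α) (b : ℝ → ℝ) (hb : Continuous b)
    (hint : IntegrableOn (fun s => Real.exp (-α * s) * b s ^ 2) (Set.Ioi 0)) :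
    Tendsto (fun t : ℝ => Real.exp (-2 * α * t) *
        ∫ s in (0:ℝ)..t, Real.exp (2 * α * s) * (Real.exp (-α * s) * b s +
          α * ∫ u in (0:ℝ)..s, Real.exp (-α * u) * b u) ^ 2)
      atTop (nhds (α / 2 * (∫ s in Set.Ioi (0:ℝ), Real.exp (-α * s) * b s) ^ 2)) := by
  set f : ℝ → ℝ := fun s => Real.exp (-α * s) * b s with hf
  have hfc : Continuous f := by fun_prop
  have hi : IntegrableOn (fun s => Real.exp (-α * s)) (Set.Ioi 0) :=
    integrableOn_exp_mul_Ioi (by linarith) 0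
  have hf1 : IntegrableOn f (Set.Ioi 0) := by
    refine (hi.add hint).mono' hfc.aestronglyMeasurable (Eventually.of_forall fun s => ?_)
    simp only [hf, Real.norm_eq_abs, abs_mul, Real.abs_exp, Pi.add_apply]
    have : |b s| ≤ 1 + b s ^ 2 := by
      rw [← sq_abs (b s)]; nlinarith [sq_nonneg (|b s| - 1), abs_nonneg (b s)]
    nlinarith [Real.exp_pos (-α * s)]
  have hf2 : IntegrableOn (fun s => f s ^ 2) (Set.Ioi 0) := by
    refine hint.mono' (hfc.pow 2).aestronglyMeasurable ?_
    filter_upwards [ae_restrict_mem measurableSet_Ioi] with s hs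
    have h1 : Real.exp (-α * s) ≤ 1 := by
      rw [Real.exp_le_one_iff]; nlinarith [mul_pos hα hs]
    simp only [hf, Real.norm_eq_abs, mul_pow]
    rw [abs_of_nonneg (by positivity)]
    gcongr
    nlinarith [Real.exp_pos (-α * s)]
  set Z : ℝ → ℝ := fun s => ∫ u in (0:ℝ)..s, f u with hZ
  have hZc : Continuous Z :=
    intervalIntegral.continuous_primitive (fun a b => hfc.intervalIntegrable a b) 0
  have hZl : Tendsto Z atTop (nhds (∫ s in Set.Ioi (0:ℝ), f s)) :=
    intervalIntegral_tendsto_integral_Ioi 0 hf1 tendsto_id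
  set C := ∫ s in Set.Ioi (0:ℝ), |f s|
  have hZb : ∀ s, 0 ≤ s → |Z s| ≤ C := by
    intro s hs
    simp only [hZ]
    rw [intervalIntegral.integral_of_le hs]
    refine (abs_integral_le_integral_abs).trans ?_
    exact setIntegral_mono_set hf1.abs (Eventually.of_forall fun _ => abs_nonneg _)
      (Eventually.of_forall Set.Ioc_subset_Ioi_self)
  have hfZ : IntegrableOn (fun s => f s ^ 2 + 2 * α * (f s * Z s)) (Set.Ioi 0) := by
    refine hf2.add (Integrable.const_mul ?_ _)
    refine (hf1.abs.mul_const C).mono' (hfc.mul hZc).aestronglyMeasurable ?_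
    filter_upwards [ae_restrict_mem measurableSet_Ioi] with s hs
    rw [Real.norm_eq_abs, abs_mul]
    have := hZb s (le_of_lt hs)
    gcongr
  have A := aux_kron α hα _ hfZ
  have D := aux_lim α hα (fun s => Z s ^ 2) (hZc.pow 2) (C ^ 2) _
    (fun s hs => by rw [abs_pow]; have := hZb s hs; gcongr) (hZl.pow 2)
  have E := A.add (D.const_mul (α ^ 2))
  convert E using 2
  · rename_i t
    rw [mul_left_comm, ← mul_add, ← intervalIntegral.integral_const_mul (α ^ 2),
      ← intervalIntegral.integral_add]
    · congr 2; ext s; ring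
    · exact Continuous.intervalIntegrable (by fun_prop) _ _
    · exact Continuous.intervalIntegrable (by fun_prop) _ _
  · field_simp; ring

/-- Almost surely, `e^{-2α t} ∫_0^t e^{2α s} ζ_s² ds → (α/2) Z_∞²` as `t → ∞`,
where `ζ_s := e^{-α s} B_s + α Z_s`. -/
theorem stmt_11 {Ω : Type*} [MeasurableSpace Ω] (P : Measure Ω) [IsProbabilityMeasure P]
    (H : ℝ) (hH1 : 1 / 2 ≤ H) (hH2 : H < 1)
    (B : ℝ → Ω → ℝ)
    (hBmeas : ∀ t : ℝ, Measurable (B t))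
    (hBgauss : ∀ (m : ℕ) (t : Fin m → ℝ) (c : Fin m → ℝ), (∀ i, 0 ≤ t i) →
      ∃ v : NNReal, Measure.map (fun ω => ∑ i, c i * B (t i) ω) P = gaussianReal 0 v)
    (hB0 : ∀ ω, B 0 ω = 0)
    (hBcov : ∀ s t : ℝ, 0 ≤ s → 0 ≤ t →
      ∫ ω, B s ω * B t ω ∂P = 1 / 2 * (s ^ (2 * H) + t ^ (2 * H) - |t - s| ^ (2 * H)))
    (hBcont : ∀ᵐ ω ∂P, ContinuousOn (fun t => B t ω) (Set.Ici (0 : ℝ)))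
    (α : ℝ) (hα : 0 < α)
    (Z : ℝ → Ω → ℝ)
    (hZ : ∀ (t : ℝ) (ω : Ω), Z t ω = ∫ s in (0:ℝ)..t, Real.exp (-α * s) * B s ω)
    (Zinf : Ω → ℝ)
    (hZinf : ∀ ω : Ω, Zinf ω = ∫ s in Set.Ioi (0:ℝ), Real.exp (-α * s) * B s ω) :
    ∀ᵐ ω ∂P, Tendsto (fun t : ℝ => Real.exp (-2 * α * t) *
        ∫ s in (0:ℝ)..t, Real.exp (2 * α * s) * (Real.exp (-α * s) * B s ω + α * Z s ω) ^ 2)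
      atTop (nhds (α / 2 * Zinf ω ^ 2)) := by
  obtain ⟨N, hNsub, hNm, hN0⟩ := exists_measurable_superset_of_null hBcont
  set W : ℝ → Ω → ℝ := fun s ω => Nᶜ.indicator (B (max s 0)) ω with hW
  have hWm : ∀ s, Measurable (W s) := fun s => (hBmeas _).indicator hNm.compl
  have hWc : ∀ ω, Continuous (fun s => W s ω) := by
    intro ω
    by_cases h : ω ∈ Nᶜ
    · have hc : ContinuousOn (fun t => B t ω) (Set.Ici (0 : ℝ)) := by
        by_contra hh
        exact h (hNsub hh)
      simp only [hW, Set.indicator_of_mem h]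
      exact hc.comp_continuous (by fun_prop) (fun s => le_max_right s 0)
    · simp only [hW, Set.indicator_of_notMem h]
      exact continuous_const
  have hWj : Measurable (Function.uncurry W) := by
    have := measurable_uncurry_of_continuous_of_measurable (u := fun s ω => W s ω) hWc hWm
    exact this
  have hNae : ∀ᵐ ω ∂P, ω ∈ Nᶜ := by
    rw [ae_iff]; simpa using hN0
  have hsq : ∀ s : ℝ, 0 < s → ∫⁻ ω, ENNReal.ofReal (Real.exp (-α * s) * W s ω ^ 2) ∂P
      = ENNReal.ofReal (s ^ (2 * H) * Real.exp (-α * s)) := by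
    intro s hs
    have h1 : ∫ ω, B s ω ^ 2 ∂P = s ^ (2 * H) := by
      have := hBcov s s hs.le hs.le
      rw [sub_self, abs_zero, Real.zero_rpow (by linarith)] at this
      simp only [pow_two]
      rw [this]; ring
    have h2 : Integrable (fun ω => B s ω ^ 2) P := by
      by_contra hh
      rw [integral_undef hh] at h1
      exact (Real.rpow_pos_of_pos hs (2 * H)).ne h1
    have h3 : ∫⁻ ω, ENNReal.ofReal (Real.exp (-α * s) * W s ω ^ 2) ∂P
        = ∫⁻ ω, ENNReal.ofReal (Real.exp (-α * s) * B s ω ^ 2) ∂P := by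
      apply lintegral_congr_ae
      filter_upwards [hNae] with ω hω
      simp only [hW, Set.indicator_of_mem hω, max_eq_left hs.le]
    rw [h3, ← ofReal_integral_eq_lintegral_ofReal (h2.const_mul _)
      (Eventually.of_forall fun ω => by positivity), integral_const_mul, h1, mul_comm]
  have hjm : Measurable (fun p : ℝ × Ω => ENNReal.ofReal (Real.exp (-α * p.1) * W p.1 p.2 ^ 2)) := by
    apply ENNReal.measurable_ofReal.comp
    exact (Measurable.mul (by fun_prop) (hWj.pow_const 2))
  have hfin : ∫⁻ ω, (∫⁻ s in Set.Ioi (0:ℝ), ENNReal.ofReal (Real.exp (-α * s) * W s ω ^ 2)) ∂P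
      ≠ ⊤ := by
    rw [← lintegral_lintegral_swap (f := fun s ω => ENNReal.ofReal (Real.exp (-α * s) * W s ω ^ 2))
      hjm.aemeasurable]
    rw [setLIntegral_congr_fun measurableSet_Ioi (fun s hs => hsq s hs)]
    have hg : IntegrableOn (fun s : ℝ => s ^ (2 * H) * Real.exp (-α * s)) (Set.Ioi 0) := by
      have := integrableOn_rpow_mul_exp_neg_mul_rpow (p := 1) (s := 2 * H) (b := α)
        (by linarith) (by norm_num) hα
      simpa using this
    exact hg.lintegral_lt_top.ne
  have hfa := ae_lt_top' (by
    exact (Measurable.lintegral_prod_left' hjm).aemeasurable) hfin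
  filter_upwards [hNae, hfa] with ω hω hlt
  have hint : IntegrableOn (fun s => Real.exp (-α * s) * W s ω ^ 2) (Set.Ioi 0) := by
    have hc := hWc ω
    refine ⟨Continuous.aestronglyMeasurable (by fun_prop), ?_⟩
    rw [hasFiniteIntegral_iff_ofReal (Eventually.of_forall fun s => by positivity)]
    exact hlt
  have key := aux_det α hα (fun s => W s ω) (hWc ω) hint
  have hWB : ∀ s, 0 ≤ s → W s ω = B s ω := by
    intro s hs
    simp only [hW, Set.indicator_of_mem hω, max_eq_left hs]
  have hZW : ∀ s, 0 ≤ s → Z s ω = ∫ u in (0:ℝ)..s, Real.exp (-α * u) * W u ω := by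
    intro s hs
    rw [hZ]
    apply intervalIntegral.integral_congr
    intro u hu
    rw [Set.uIcc_of_le hs] at hu
    simp only [hWB u hu.1]
  have hZi : Zinf ω = ∫ s in Set.Ioi (0:ℝ), Real.exp (-α * s) * W s ω := by
    rw [hZinf]
    apply setIntegral_congr_fun measurableSet_Ioi
    intro u hu
    simp only [hWB u (le_of_lt hu)]
  rw [hZi]
  refine key.congr' ?_
  filter_upwards [eventually_ge_atTop 0] with t ht
  congr 1
  apply intervalIntegral.integral_congr
  intro u hu
  rw [Set.uIcc_of_le ht] at hu
  simp only [hWB u hu.1, hZW u hu.1]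
end

section
/- Almost surely, as the integer n → ∞, e^{−α n} X_n converges to A_∞ + α Z_∞. -/
open MeasureTheory ProbabilityTheory Filter

lemma aux_A (α : ℝ) (hα : 0 < α) (L : ℝ → ℝ)
    (hLmeas : Measurable L) (hLbdd : ∃ M : ℝ, ∀ t : ℝ, |L t| ≤ M)
    (hLper : ∀ t : ℝ, L (t + 1) = L t)
    (A : ℝ → ℝ) (hA : ∀ t : ℝ, A t = ∫ s in (0:ℝ)..t, Real.exp (-α * s) * L s) :
    Tendsto (fun n : ℕ => A n) atTop (nhds (A 1 / (1 - Real.exp (-α)))) := by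
  obtain ⟨M, hM⟩ := hLbdd
  have hint : ∀ a b : ℝ, IntervalIntegrable (fun s => Real.exp (-α * s) * L s) volume a b := by
    intro a b
    have h1 : IntervalIntegrable (fun s => Real.exp (-α * s) * M) volume a b := by
      apply Continuous.intervalIntegrable
      fun_prop
    refine h1.mono_fun (by fun_prop) (Eventually.of_forall fun s => ?_)
    simp only [norm_mul, Real.norm_eq_abs]
    refine mul_le_mul_of_nonneg_left ?_ (abs_nonneg _)
    exact (hM s).trans (le_abs_self M)
  have hrec : ∀ t : ℝ, A (t + 1) = A 1 + Real.exp (-α) * A t := by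
    intro t
    rw [hA (t+1), ← intervalIntegral.integral_add_adjacent_intervals (hint 0 1) (hint 1 (t+1)), ← hA 1,
      hA t, ← intervalIntegral.integral_const_mul]
    congr 1
    have := intervalIntegral.integral_comp_add_right (a := 0) (b := t)
      (fun s => Real.exp (-α * s) * L s) 1
    rw [zero_add] at this
    rw [← this]
    congr 1
    ext s
    rw [hLper, ← mul_assoc, ← Real.exp_add]
    congr 2
    ring
  have hr : Real.exp (-α) < 1 := by
    rw [Real.exp_lt_one_iff]; linarith
  have hne : 1 - Real.exp (-α) ≠ 0 := by linarith
  have hcl : ∀ n : ℕ, A n = A 1 / (1 - Real.exp (-α)) * (1 - Real.exp (-α) ^ n) := by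
    intro n
    induction n with
    | zero => simp [hA]
    | succ k ih =>
      push_cast
      rw [hrec, ih]
      field_simp
      ring
  simp_rw [hcl]
  have := (tendsto_pow_atTop_nhds_zero_of_lt_one (Real.exp_pos (-α)).le hr)
  simpa using (this.const_sub 1).const_mul (A 1 / (1 - Real.exp (-α)))

lemma aux_g_int (α : ℝ) (hα : 0 < α) :
    IntegrableOn (fun s : ℝ => Real.exp (-α * s) * (2 + s ^ 2)) (Set.Ioi 0) := by
  have h0 : IntegrableOn (fun s : ℝ => Real.exp (-α * s)) (Set.Ioi 0) :=
    integrableOn_exp_mul_Ioi (by linarith) 0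
  have h2 := integrableOn_rpow_mul_exp_neg_mul_rpow (p := 1) (s := 2) (b := α)
    (by norm_num) (by norm_num) hα
  have := (h0.const_mul 2).add h2
  refine this.congr (Eventually.of_forall fun s => ?_)
  simp
  ring

lemma aux_g_sum (α : ℝ) (hα : 0 < α) :
    Summable (fun n : ℕ => Real.exp (-α * n) * (2 + (n:ℝ) ^ 2)) := by
  have h0 := Real.summable_pow_mul_exp_neg_nat_mul 0 hα
  have h2 := Real.summable_pow_mul_exp_neg_nat_mul 2 hα
  refine ((h0.mul_left 2).add h2).congr fun n => ?_
  simp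
  ring

lemma aux_mom {Ω : Type*} [MeasurableSpace Ω] (P : Measure Ω) [IsProbabilityMeasure P]
    (H : ℝ) (hH1 : 1 / 2 ≤ H) (hH2 : H < 1) (Y : Ω → ℝ) (hY : Measurable Y)
    (v : NNReal) (hv : Measure.map Y P = gaussianReal 0 v) (t : ℝ) (ht : 0 ≤ t)
    (hcov : ∫ ω, Y ω * Y ω ∂P = t ^ (2 * H)) :
    ∫⁻ ω, ‖Y ω‖ₑ ∂P ≤ ENNReal.ofReal (2 + t ^ 2) := by
  have hm : MemLp Y 2 P := by
    have h := memLp_id_gaussianReal (μ := 0) (v := v) 2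
    rw [← hv] at h
    exact (memLp_map_measure_iff (by fun_prop) hY.aemeasurable).1 h
  have hsq : Integrable (fun ω => Y ω * Y ω) P := by
    simpa [sq] using hm.integrable_sq
  have hab : Integrable Y P := hm.integrable (by norm_num)
  rw [← ofReal_integral_norm_eq_lintegral_enorm hab]
  apply ENNReal.ofReal_le_ofReal
  have h1 : ∫ ω, ‖Y ω‖ ∂P ≤ ∫ ω, (1 + Y ω * Y ω) ∂P := by
    apply integral_mono hab.norm ((integrable_const 1).add hsq)
    intro ω
    simp only [Real.norm_eq_abs, Pi.add_apply]
    nlinarith [abs_mul_abs_self (Y ω), sq_nonneg (|Y ω| - 1), abs_nonneg (Y ω)]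
  rw [integral_add (integrable_const 1) hsq, hcov] at h1
  have h2 : t ^ (2 * H) ≤ 1 + t ^ 2 := by
    rcases le_total t 1 with h | h
    · have := Real.rpow_le_one ht h (show 0 ≤ 2 * H by linarith)
      nlinarith [sq_nonneg t]
    · have := Real.rpow_le_rpow_of_exponent_le h (show 2 * H ≤ (2:ℕ) by push_cast; linarith)
      rw [Real.rpow_natCast] at this
      linarith
  simp only [integral_const, probReal_univ, smul_eq_mul, one_mul] at h1
  linarith

lemma aux_seq {Ω : Type*} [MeasurableSpace Ω] (P : Measure Ω)
    (α : ℝ) (hα : 0 < α) (B : ℝ → Ω → ℝ) (hBmeas : ∀ t : ℝ, Measurable (B t))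
    (hb : ∀ t, 0 ≤ t → ∫⁻ ω, ‖B t ω‖ₑ ∂P ≤ ENNReal.ofReal (2 + t ^ 2)) :
    ∀ᵐ ω ∂P, Tendsto (fun n : ℕ => Real.exp (-α * n) * B n ω) atTop (nhds 0) := by
  have hm : ∀ n : ℕ, Measurable fun ω => ‖Real.exp (-α * n) * B n ω‖ₑ := by
    intro n
    have := hBmeas n
    fun_prop
  have hfin : ∫⁻ ω, ∑' n : ℕ, ‖Real.exp (-α * n) * B n ω‖ₑ ∂P ≠ ⊤ := by
    rw [lintegral_tsum (fun n => (hm n).aemeasurable)]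
    refine ne_top_of_le_ne_top (aux_g_sum α hα).tsum_ofReal_ne_top (ENNReal.tsum_le_tsum fun n => ?_)
    simp_rw [enorm_mul]
    rw [lintegral_const_mul _ (by have := hBmeas n; fun_prop), ENNReal.ofReal_mul (Real.exp_pos _).le,
      Real.enorm_of_nonneg (Real.exp_pos _).le]
    gcongr
    exact hb n n.cast_nonneg
  filter_upwards [ae_lt_top (Measurable.tsum hm) hfin] with ω hω
  have := ENNReal.tendsto_atTop_zero_of_tsum_ne_top hω.ne
  rw [tendsto_zero_iff_norm_tendsto_zero]
  have h2 := (ENNReal.tendsto_toReal ENNReal.zero_ne_top).comp this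
  simpa [Function.comp_def] using h2

lemma aux_int {Ω : Type*} [MeasurableSpace Ω] (P : Measure Ω) [IsProbabilityMeasure P]
    (α : ℝ) (hα : 0 < α) (B : ℝ → Ω → ℝ) (hBmeas : ∀ t : ℝ, Measurable (B t))
    (hBcont : ∀ᵐ ω ∂P, ContinuousOn (fun t => B t ω) (Set.Ici (0 : ℝ)))
    (hb : ∀ t, 0 ≤ t → ∫⁻ ω, ‖B t ω‖ₑ ∂P ≤ ENNReal.ofReal (2 + t ^ 2)) :
    ∀ᵐ ω ∂P, IntegrableOn (fun s => Real.exp (-α * s) * B s ω) (Set.Ioi 0) := by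
  set N := toMeasurable P {ω | ContinuousOn (fun t => B t ω) (Set.Ici (0 : ℝ))}ᶜ with hN
  have hN0 : P N = 0 := by
    rw [hN, measure_toMeasurable]; exact hBcont
  have hNm : MeasurableSet N := measurableSet_toMeasurable _ _
  have hNc : ∀ ω, ω ∉ N → ContinuousOn (fun t => B t ω) (Set.Ici (0 : ℝ)) := by
    intro ω hω
    by_contra hc
    exact hω (subset_toMeasurable _ _ hc)
  set C : Ω → ℝ → ℝ := fun ω t => Nᶜ.indicator (fun ω => B (max t 0) ω) ω with hC
  have hCc : ∀ ω, Continuous (C ω) := by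
    intro ω
    by_cases hω : ω ∈ N
    · have : C ω = fun _ => 0 := by ext t; simp [hC, hω]
      rw [this]; exact continuous_const
    · have : C ω = fun t => B (max t 0) ω := by ext t; simp [hC, hω]
      rw [this]
      exact (hNc ω hω).comp_continuous (by fun_prop) (fun t => Set.mem_Ici.2 (le_max_right _ _))
  have hCm : ∀ t, Measurable fun ω => C ω t := fun t => (hBmeas _).indicator hNm.compl
  have hjoint : Measurable (fun p : Ω × ℝ => C p.1 p.2) := by
    have := measurable_uncurry_of_continuous_of_measurable (u := fun t ω => C ω t) hCc hCm
    exact this.comp measurable_swap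
  have hae : ∀ᵐ ω ∂P, ω ∉ N := measure_eq_zero_iff_ae_notMem.1 hN0
  have hfin : ∫⁻ ω, (∫⁻ s in Set.Ioi (0:ℝ), ‖Real.exp (-α * s) * C ω s‖ₑ) ∂P ≠ ⊤ := by
    rw [lintegral_lintegral_swap (Measurable.aemeasurable (by unfold Function.uncurry; fun_prop))]
    refine ne_top_of_le_ne_top (aux_g_int α hα).lintegral_lt_top.ne ?_
    refine setLIntegral_mono (by fun_prop) fun s hs => ?_
    simp_rw [enorm_mul]
    rw [lintegral_const_mul _ (by have := hCm s; fun_prop), ENNReal.ofReal_mul (Real.exp_pos _).le,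
      Real.enorm_of_nonneg (Real.exp_pos _).le]
    gcongr
    refine le_trans (lintegral_mono fun ω => ?_) (hb s (le_of_lt hs))
    by_cases hω : ω ∈ N
    · simp [hC, hω]
    · simp [hC, hω, max_eq_left (le_of_lt (Set.mem_Ioi.1 hs))]
  have hm2 : Measurable fun ω => ∫⁻ s in Set.Ioi (0:ℝ), ‖Real.exp (-α * s) * C ω s‖ₑ := by
    apply Measurable.lintegral_prod_right'
      (f := fun p : Ω × ℝ => ‖Real.exp (-α * p.2) * C p.1 p.2‖ₑ)
    fun_prop
  filter_upwards [hae, ae_lt_top hm2 hfin] with ω hω h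
  have hi : IntegrableOn (fun s => Real.exp (-α * s) * C ω s) (Set.Ioi 0) := by
    refine ⟨?_, h⟩
    have := hCc ω
    exact Continuous.aestronglyMeasurable (by fun_prop)
  refine hi.congr_fun (fun s hs => ?_) measurableSet_Ioi
  simp [hC, hω, max_eq_left (le_of_lt (Set.mem_Ioi.1 hs))]

/-- Almost surely, as the integer `n → ∞`, `e^{-α n} X_n → A_∞ + α Z_∞`. -/
theorem stmt_14 {Ω : Type*} [MeasurableSpace Ω] (P : Measure Ω) [IsProbabilityMeasure P]
    (H : ℝ) (hH1 : 1 / 2 ≤ H) (hH2 : H < 1)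
    (B : ℝ → Ω → ℝ)
    (hBmeas : ∀ t : ℝ, Measurable (B t))
    (hBgauss : ∀ (m : ℕ) (t : Fin m → ℝ) (c : Fin m → ℝ), (∀ i, 0 ≤ t i) →
      ∃ v : NNReal, Measure.map (fun ω => ∑ i, c i * B (t i) ω) P = gaussianReal 0 v)
    (hB0 : ∀ ω, B 0 ω = 0)
    (hBcov : ∀ s t : ℝ, 0 ≤ s → 0 ≤ t →
      ∫ ω, B s ω * B t ω ∂P = 1 / 2 * (s ^ (2 * H) + t ^ (2 * H) - |t - s| ^ (2 * H)))
    (hBcont : ∀ᵐ ω ∂P, ContinuousOn (fun t => B t ω) (Set.Ici (0 : ℝ)))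
    (α : ℝ) (hα : 0 < α)
    (Z : ℝ → Ω → ℝ)
    (hZ : ∀ (t : ℝ) (ω : Ω), Z t ω = ∫ s in (0:ℝ)..t, Real.exp (-α * s) * B s ω)
    (Zinf : Ω → ℝ)
    (hZinf : ∀ ω : Ω, Zinf ω = ∫ s in Set.Ioi (0:ℝ), Real.exp (-α * s) * B s ω)
    (L : ℝ → ℝ)
    (hLmeas : Measurable L) (hLbdd : ∃ M : ℝ, ∀ t : ℝ, |L t| ≤ M)
    (hLper : ∀ t : ℝ, L (t + 1) = L t)
    (A : ℝ → ℝ) (hA : ∀ t : ℝ, A t = ∫ s in (0:ℝ)..t, Real.exp (-α * s) * L s)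
    (Ainf : ℝ) (hAinf : Ainf = A 1 / (1 - Real.exp (-α)))
    (X : ℝ → Ω → ℝ)
    (hX : ∀ (t : ℝ) (ω : Ω), X t ω = Real.exp (α * t) * A t
        + α * Real.exp (α * t) * Z t ω + B t ω) :
    ∀ᵐ ω ∂P, Tendsto (fun n : ℕ => Real.exp (-α * n) * X n ω)
      atTop (nhds (Ainf + α * Zinf ω)) := by
  have hb : ∀ t, 0 ≤ t → ∫⁻ ω, ‖B t ω‖ₑ ∂P ≤ ENNReal.ofReal (2 + t ^ 2) := by
    intro t ht
    obtain ⟨v, hv⟩ := hBgauss 1 (fun _ => t) (fun _ => 1) (fun _ => ht)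
    refine aux_mom P H hH1 hH2 (B t) (hBmeas t) v (by simpa using hv) t ht ?_
    rw [hBcov t t ht ht, sub_self, abs_zero, Real.zero_rpow (by linarith)]
    ring
  filter_upwards [aux_seq P α hα B hBmeas hb, aux_int P α hα B hBmeas hBcont hb] with ω h1 h2
  have hAl := aux_A α hα L hLmeas hLbdd hLper A hA
  rw [← hAinf] at hAl
  have hZl : Tendsto (fun n : ℕ => Z n ω) atTop (nhds (Zinf ω)) := by
    simp_rw [hZ, hZinf]
    exact intervalIntegral_tendsto_integral_Ioi 0 h2 tendsto_natCast_atTop_atTop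
  have := (hAl.add (hZl.const_mul α)).add h1
  rw [add_zero] at this
  refine this.congr fun n => ?_
  have he : Real.exp (-α * n) * Real.exp (α * n) = 1 := by
    rw [← Real.exp_add]; simp
  rw [hX]
  linear_combination (-(A n) - α * Z n ω) * he
end

section
/- Almost surely, as the integer n → ∞, (e^{−α n}/n) ∫_0^n |B_s X_s| ds converges to 0. -/
open MeasureTheory ProbabilityTheory Filter

lemma aux_moment {Ω : Type*} [MeasurableSpace Ω] (P : Measure Ω) [IsProbabilityMeasure P]
    (Y : Ω → ℝ) (hY : Measurable Y) (v : NNReal) (hv : Measure.map Y P = gaussianReal 0 v)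
    (c : ℝ) (hc : 0 ≤ c) (h2 : ∫ ω, Y ω * Y ω ∂P = c ^ 2) (d : ℝ) (hd : 0 ≤ d) (p : ℕ) :
    ∫⁻ ω, ENNReal.ofReal ((|Y ω| * d) ^ p) ∂P
      = ENNReal.ofReal ((c * d) ^ p) * ∫⁻ x, ENNReal.ofReal (|x| ^ p) ∂(gaussianReal 0 1) := by
  have hvar : (v : ℝ) = c ^ 2 := by
    rw [← variance_id_gaussianReal (μ := 0) (v := v), variance_of_integral_eq_zero
      aemeasurable_id (by simp), ← hv,
      integral_map hY.aemeasurable (by fun_prop), ← h2]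
    simp [pow_two]
  have hg : gaussianReal 0 v = Measure.map (fun x => c * x) (gaussianReal 0 1) := by
    rw [gaussianReal_map_const_mul]
    congr 1
    · simp
    · ext; simp [hvar]
  have hm : Measurable fun x : ℝ => ENNReal.ofReal ((|x| * d) ^ p) := by fun_prop
  rw [← lintegral_map hm hY, hv, hg, lintegral_map hm (by fun_prop),
    ← lintegral_const_mul _ (by fun_prop)]
  congr 1 with x
  rw [← ENNReal.ofReal_mul (by positivity), abs_mul, abs_of_nonneg hc]
  congr 1
  ring

lemma aux_gauss_fin (p : ℕ) (hp : p ≠ 0) :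
    ∫⁻ x, ENNReal.ofReal (|x| ^ p) ∂(gaussianReal 0 1) < ⊤ := by
  have h := (memLp_id_gaussianReal (μ := 0) (v := 1) (p : NNReal))
  have h' := (MemLp.integrable_norm_pow (p := p) (by simpa using h) hp).lintegral_lt_top
  simpa using h'

lemma aux_prob {Ω : Type*} [MeasurableSpace Ω] (P : Measure Ω) [IsProbabilityMeasure P]
    (H : ℝ) (hH1 : 1 / 2 ≤ H)
    (B : ℝ → Ω → ℝ)
    (hBmeas : ∀ t : ℝ, Measurable (B t))
    (hBgauss : ∀ (m : ℕ) (t : Fin m → ℝ) (c : Fin m → ℝ), (∀ i, 0 ≤ t i) →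
      ∃ v : NNReal, Measure.map (fun ω => ∑ i, c i * B (t i) ω) P = gaussianReal 0 v)
    (hBcov : ∀ s t : ℝ, 0 ≤ s → 0 ≤ t →
      ∫ ω, B s ω * B t ω ∂P = 1 / 2 * (s ^ (2 * H) + t ^ (2 * H) - |t - s| ^ (2 * H)))
    (hBcont : ∀ᵐ ω ∂P, ContinuousOn (fun t => B t ω) (Set.Ici (0 : ℝ)))
    (p : ℕ) (hp : 2 ≤ p) (hpH : 2 ≤ p * (1 - H)) :
    ∀ᵐ ω ∂P, IntegrableOn (fun s => (|B s ω| * (1 + s)⁻¹) ^ p) (Set.Ioi 0) := by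
  obtain ⟨G, hGs, hGm, hG⟩ : ∃ G : Set Ω, (∀ ω ∈ G, ContinuousOn (fun t => B t ω) (Set.Ici (0 : ℝ)))
      ∧ MeasurableSet G ∧ ∀ᵐ ω ∂P, ω ∈ G := by
    refine ⟨(toMeasurable P {ω | ContinuousOn (fun t => B t ω) (Set.Ici (0 : ℝ))}ᶜ)ᶜ,
      fun ω hω => ?_, (measurableSet_toMeasurable _ _).compl, ?_⟩
    · by_contra hc
      exact hω (subset_toMeasurable P _ hc)
    · have h0 : P {ω | ContinuousOn (fun t => B t ω) (Set.Ici (0 : ℝ))}ᶜ = 0 := hBcont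
      rw [← measure_toMeasurable] at h0
      exact compl_mem_ae_iff.2 h0
  have hcont : ∀ ω, Continuous fun t => G.indicator (B (max t 0)) ω := by
    intro ω
    by_cases hω : ω ∈ G
    · simp only [Set.indicator_of_mem hω]
      exact (hGs ω hω).comp_continuous (f := fun t : ℝ => max t 0) (by fun_prop)
        (fun t => le_max_right t 0)
    · simp only [Set.indicator_of_notMem hω]; fun_prop
  have hjm := measurable_uncurry_of_continuous_of_measurable hcont
    (fun t => (hBmeas _).indicator hGm)
  set F : ℝ → Ω → ENNReal := fun s ω =>
    ENNReal.ofReal ((|G.indicator (B (max s 0)) ω| * (1 + s)⁻¹) ^ p) with hF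
  have hFm : Measurable (Function.uncurry F) := by
    have h1 : Measurable (fun x : ℝ × Ω => G.indicator (B (max x.1 0)) x.2) := hjm
    have : Measurable (fun x : ℝ × Ω => ENNReal.ofReal
      ((|G.indicator (B (max x.1 0)) x.2| * (1 + x.1)⁻¹) ^ p)) := by fun_prop
    exact this
  set C := ∫⁻ x, ENNReal.ofReal (|x| ^ p) ∂(gaussianReal 0 1) with hC
  have hCfin : C < ⊤ := aux_gauss_fin p (by omega)
  have hmom : ∀ s ∈ Set.Ioi (0:ℝ), ∫⁻ ω, F s ω ∂P ≤ ENNReal.ofReal ((s + 1) ^ (-2:ℝ)) * C := by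
    intro s hs
    have hs : 0 < s := hs
    have e1 : ∫⁻ ω, F s ω ∂P = ∫⁻ ω, ENNReal.ofReal ((|B s ω| * (1 + s)⁻¹) ^ p) ∂P := by
      apply lintegral_congr_ae
      filter_upwards [hG] with ω hω
      simp [hF, Set.indicator_of_mem hω, max_eq_left hs.le]
    obtain ⟨v, hv⟩ := hBgauss 1 (fun _ => s) (fun _ => 1) (fun _ => hs.le)
    rw [e1, aux_moment P (B s) (hBmeas s) v (by simpa using hv) (s ^ H) (by positivity)
      (by
        rw [hBcov s s hs.le hs.le, sub_self, abs_zero, Real.zero_rpow (by linarith),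
          ← Real.rpow_natCast, ← Real.rpow_mul hs.le]
        push_cast
        rw [mul_comm H 2]; ring) _ (by positivity) p]
    gcongr
    calc (s ^ H * (1 + s)⁻¹) ^ p ≤ ((1 + s) ^ (H - 1)) ^ p := by
          gcongr
          rw [Real.rpow_sub_one (by positivity), div_eq_mul_inv]
          gcongr
          linarith
      _ = (1 + s) ^ ((H - 1) * p) := by
          rw [← Real.rpow_natCast, ← Real.rpow_mul (by positivity)]
      _ ≤ (1 + s) ^ (-2 : ℝ) := by
          apply Real.rpow_le_rpow_of_exponent_le <;> nlinarith
      _ = _ := by rw [add_comm]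
  have hfin : ∫⁻ ω, (∫⁻ s in Set.Ioi (0:ℝ), F s ω) ∂P ≠ ⊤ := by
    rw [← lintegral_lintegral_swap hFm.aemeasurable]
    refine ne_of_lt (lt_of_le_of_lt (setLIntegral_mono (by fun_prop) hmom) ?_)
    rw [lintegral_mul_const _ (by fun_prop)]
    refine ENNReal.mul_lt_top ?_ hCfin
    exact (integrableOn_add_rpow_Ioi_of_lt (a := -2) (c := 0) (m := 1) (by norm_num)
      (by norm_num)).lintegral_lt_top
  have hae := ae_lt_top (hFm.lintegral_prod_left' ) hfin
  filter_upwards [hae, hG] with ω hω hωG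
  have hc := hGs ω hωG
  refine ⟨?_, ?_⟩
  · refine ContinuousOn.aestronglyMeasurable ?_ measurableSet_Ioi
    have := hc.mono Set.Ioi_subset_Ici_self
    have h2 : ContinuousOn (fun s : ℝ => (1 + s)⁻¹) (Set.Ioi 0) :=
      ContinuousOn.inv₀ (by fun_prop) (fun x hx => by have : 0 < x := hx; positivity)
    exact (this.abs.mul h2).pow p
  · rw [hasFiniteIntegral_iff_ofReal]
    · refine lt_of_eq_of_lt ?_ hω
      refine setLIntegral_congr_fun measurableSet_Ioi fun s hs => ?_
      have hs : 0 < s := hs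
      simp [F, Set.indicator_of_mem hωG, max_eq_left hs.le]
    · filter_upwards [ae_restrict_mem measurableSet_Ioi] with s hs
      have hs : 0 < s := hs
      simp only [Pi.zero_apply]; positivity


lemma aux_bdd (u w : ℝ → ℝ) (hw : IntegrableOn w (Set.Ioi 0)) (hu : ∀ s, 0 < s → |u s| ≤ w s)
    (t : ℝ) (ht : 0 ≤ t) : |∫ s in (0:ℝ)..t, u s| ≤ ∫ s in Set.Ioi (0:ℝ), w s := by
  have h := intervalIntegral.norm_integral_le_of_norm_le (μ := volume) (f := u) (g := w) ht
    (ae_of_all _ fun s hs => hu s hs.1)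
    ((intervalIntegrable_iff_integrableOn_Ioc_of_le ht).2 (hw.mono_set Set.Ioc_subset_Ioi_self))
  refine h.trans ?_
  rw [intervalIntegral.integral_of_le ht]
  refine setIntegral_mono_set hw ?_ (Set.Ioc_subset_Ioi_self).eventuallyLE
  filter_upwards [ae_restrict_mem measurableSet_Ioi] with s hs
  exact (abs_nonneg _).trans (hu s hs)

lemma aux_young (x ε : ℝ) (hx : 0 ≤ x) (hε : 0 < ε) (p : ℕ) (hp : 1 ≤ p) :
    x ≤ ε + (ε ^ (p - 1))⁻¹ * x ^ p := by
  obtain ⟨q, rfl⟩ : ∃ q, p = q + 1 := ⟨p - 1, by omega⟩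
  simp only [Nat.add_sub_cancel]
  rcases le_total x ε with h | h
  · have : 0 ≤ (ε ^ q)⁻¹ * x ^ (q + 1) := by positivity
    linarith
  · have h1 : 1 ≤ (ε ^ q)⁻¹ * x ^ q := by
      rw [inv_mul_eq_div, one_le_div (by positivity)]
      gcongr
    have : x ≤ (ε ^ q)⁻¹ * x ^ (q + 1) := by
      rw [pow_succ, ← mul_assoc]
      exact le_mul_of_one_le_left hx h1
    linarith

lemma aux_sq (x : ℝ) (hx : 0 ≤ x) (p : ℕ) (hp : 2 ≤ p) : x ^ 2 ≤ 1 + x ^ p := by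
  rcases le_total x 1 with h | h
  · have : 0 ≤ x ^ p := by positivity
    have : x ^ 2 ≤ 1 := pow_le_one₀ hx h
    linarith
  · have := pow_le_pow_right₀ h hp
    linarith

lemma aux_exp (α : ℝ) (hα : 0 < α) : ∃ C, 0 ≤ C ∧ ∀ s, 0 ≤ s →
    Real.exp (-α * s) * (1 + s) ≤ C * Real.exp (-(α/2) * s) ∧
    Real.exp (-α * s) * (1 + s) ≤ C := by
  refine ⟨1 + 2 / α, by positivity, fun s hs => ?_⟩
  have h1 : 1 + s ≤ (1 + 2 / α) * Real.exp ((α/2) * s) := by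
    have h2 := Real.add_one_le_exp ((α/2) * s)
    have h3 : 0 ≤ α / 2 * s := by positivity
    have h4 : (1 + 2 / α) * (α / 2 * s + 1) ≤ (1 + 2 / α) * Real.exp ((α/2) * s) := by gcongr
    have h5 : (1 + 2 / α) * (α / 2 * s + 1) = α / 2 * s + 1 + s + 2 / α := by field_simp; ring
    have : 0 ≤ 2 / α := by positivity
    linarith
  have h6 : Real.exp (-α * s) * (1 + s) ≤ (1 + 2 / α) * Real.exp (-(α/2) * s) := by
    calc _ ≤ Real.exp (-α * s) * ((1 + 2 / α) * Real.exp ((α/2) * s)) := by gcongr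
      _ = (1 + 2 / α) * (Real.exp (-α * s) * Real.exp ((α/2) * s)) := by ring
      _ = _ := by rw [← Real.exp_add]; ring_nf
  refine ⟨h6, h6.trans ?_⟩
  have : Real.exp (-(α/2) * s) ≤ 1 := Real.exp_le_one_iff.2 (by nlinarith)
  exact mul_le_of_le_one_right (by positivity) this

lemma aux_conv (α : ℝ) (hα : 0 < α) (h : ℝ → ℝ) (hi : IntegrableOn h (Set.Ioi 0)) :
    Tendsto (fun n : ℕ => ∫ s in Set.Ioi (0:ℝ), Real.exp (-α * max (n - s) 0) * h s)
      atTop (nhds 0) := by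
  have := tendsto_integral_of_dominated_convergence (μ := volume.restrict (Set.Ioi (0:ℝ)))
    (F := fun (n : ℕ) s => Real.exp (-α * max (n - s) 0) * h s) (f := fun _ => 0)
    (fun s => ‖h s‖) (fun n => by
      refine AEStronglyMeasurable.mul (Continuous.aestronglyMeasurable (by fun_prop)) hi.1)
    hi.norm (fun n => ae_of_all _ fun s => by
      rw [norm_mul, Real.norm_of_nonneg (Real.exp_pos _).le]
      refine mul_le_of_le_one_left (norm_nonneg _) (Real.exp_le_one_iff.2 ?_)
      nlinarith [le_max_right ((n:ℝ) - s) 0])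
    (ae_of_all _ fun s => by
      rw [← zero_mul (h s)]
      refine Tendsto.mul_const _ (Real.tendsto_exp_atBot.comp ?_)
      refine Tendsto.const_mul_atTop_of_neg (by linarith) ?_
      refine tendsto_atTop_mono (fun n => le_max_left _ _) ?_
      exact tendsto_atTop_add_const_right _ (-s) tendsto_natCast_atTop_atTop)
  simpa using this

lemma aux_conv_exp (α : ℝ) (hα : 0 < α) (n : ℕ) :
    ∫ s in (0:ℝ)..n, Real.exp (-α * (n - s)) ≤ 1 / α := by
  have : ∀ s : ℝ, HasDerivAt (fun s => Real.exp (-α * (n - s)) / α) (Real.exp (-α * (n - s))) s := by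
    intro s
    have h1 : HasDerivAt (fun s : ℝ => -α * (n - s)) α s := by
      simpa using ((hasDerivAt_id s).const_sub (n:ℝ)).const_mul (-α)
    have := h1.exp.div_const α
    rwa [mul_div_assoc, div_self hα.ne', mul_one] at this
  rw [intervalIntegral.integral_eq_sub_of_hasDerivAt (fun s _ => this s)
    (Continuous.intervalIntegrable (by fun_prop) _ _)]
  simp only [sub_self, mul_zero, Real.exp_zero]
  have : 0 ≤ Real.exp (-α * (n - 0)) / α := by positivity
  linarith

lemma aux_poly (α : ℝ) (hα : 0 < α) (G : ℝ) :
    Tendsto (fun n : ℕ => Real.exp (-α * n) * (1 + n) ^ 2 * (n + G)) atTop (nhds 0) := by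
  have key : ∀ k : ℕ, Tendsto (fun n : ℕ => (n:ℝ) ^ k * Real.exp (-α * n)) atTop (nhds 0) := by
    intro k
    have h1 := (Real.tendsto_pow_mul_exp_neg_atTop_nhds_zero k).comp
      (tendsto_natCast_atTop_atTop.const_mul_atTop hα)
    have h2 := h1.const_mul ((α ^ k)⁻¹)
    rw [mul_zero] at h2
    refine h2.congr fun n => ?_
    simp only [Function.comp, mul_pow, neg_mul]
    field_simp
  have h := (((key 3).add ((key 2).const_mul (2 + G))).add ((key 1).const_mul (1 + 2 * G))).add
    ((key 0).const_mul G)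
  simp only [mul_zero, add_zero] at h
  refine h.congr fun n => ?_
  ring

lemma aux_det_s17 (α : ℝ) (hα : 0 < α) (f x : ℝ → ℝ) (p : ℕ) (hp : 2 ≤ p)
    (hi : IntegrableOn (fun s => (|f s| * (1 + s)⁻¹) ^ p) (Set.Ioi 0))
    (C : ℝ) (hC : 0 < C) (hx : ∀ s, 0 < s → |x s| ≤ C * Real.exp (α * s) + |f s|) :
    Tendsto (fun n : ℕ => Real.exp (-α * n) / n *
        ∫ s in (0:ℝ)..(n:ℝ), |f s * x s|) atTop (nhds 0) := by
  set h := fun s => (|f s| * (1 + s)⁻¹) ^ p with hh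
  have hh0 : ∀ s, 0 < s → 0 ≤ h s := fun s hs => by positivity
  set G := ∫ s in Set.Ioi (0:ℝ), h s with hG
  have bound : ∀ ε : ℝ, 0 < ε → ∀ n : ℕ, 1 ≤ n → Real.exp (-α * n) / n *
        ∫ s in (0:ℝ)..(n:ℝ), |f s * x s| ≤ 2 * C * ε * (1 / α) +
        2 * C * (ε ^ (p-1))⁻¹ * (∫ s in Set.Ioi (0:ℝ), Real.exp (-α * max (n - s) 0) * h s)
        + Real.exp (-α * n) * (1 + n) ^ 2 * (n + G) := by
    intro ε hε n hn
    have hn1 : (1:ℝ) ≤ n := by exact_mod_cast hn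
    have hn0 : (0:ℝ) ≤ n := by linarith
    have i1 : IntegrableOn (fun s : ℝ => Real.exp (-α * (n - s))) (Set.Ioc 0 n) :=
      (Continuous.integrableOn_Ioc (by fun_prop))
    have i2' : IntegrableOn (fun s : ℝ => Real.exp (-α * max (n - s) 0) * h s) (Set.Ioi 0) := by
      refine Integrable.mono hi (AEStronglyMeasurable.mul
        (Continuous.aestronglyMeasurable (by fun_prop)) hi.1) (ae_of_all _ fun s => ?_)
      rw [norm_mul, Real.norm_of_nonneg (Real.exp_pos _).le]
      refine mul_le_of_le_one_left (norm_nonneg _) (Real.exp_le_one_iff.2 ?_)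
      nlinarith [le_max_right ((n:ℝ) - s) 0]
    have i2 := i2'.mono_set (t := Set.Ioi 0) (s := Set.Ioc 0 (n:ℝ)) Set.Ioc_subset_Ioi_self
    have i3 : IntegrableOn (fun s : ℝ => (1:ℝ)) (Set.Ioc 0 n) :=
      (Continuous.integrableOn_Ioc (by fun_prop))
    have i4 := hi.mono_set (t := Set.Ioi 0) (s := Set.Ioc 0 (n:ℝ)) Set.Ioc_subset_Ioi_self
    have m2 : ∫ s in Set.Ioc (0:ℝ) n, Real.exp (-α * max (n - s) 0) * h s ≤
        ∫ s in Set.Ioi (0:ℝ), Real.exp (-α * max (n - s) 0) * h s := by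
      refine setIntegral_mono_set i2' ?_ (Set.Ioc_subset_Ioi_self).eventuallyLE
      filter_upwards [ae_restrict_mem measurableSet_Ioi] with s hs
      exact mul_nonneg (Real.exp_pos _).le (hh0 s hs)
    have m4 : ∫ s in Set.Ioc (0:ℝ) n, h s ≤ G := by
      refine setIntegral_mono_set hi ?_ (Set.Ioc_subset_Ioi_self).eventuallyLE
      filter_upwards [ae_restrict_mem measurableSet_Ioi] with s hs
      exact hh0 s hs
    have m1 := aux_conv_exp α hα n
    rw [intervalIntegral.integral_of_le hn0] at m1
    rw [← intervalIntegral.integral_const_mul, intervalIntegral.integral_of_le hn0]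
    have step : ∫ s in Set.Ioc (0:ℝ) n, Real.exp (-α * n) / n * |f s * x s| ≤
        ∫ s in Set.Ioc (0:ℝ) n, (2 * C * ε * Real.exp (-α * (n - s)) +
          2 * C * (ε ^ (p-1))⁻¹ * (Real.exp (-α * max (n - s) 0) * h s)
          + Real.exp (-α * n) * (1 + n) ^ 2 * (1 + h s)) := by
      refine integral_mono_of_nonneg (ae_of_all _ fun s => by
        simp only [Pi.zero_apply]; positivity) (((i1.const_mul _).add (i2.const_mul _)).add
          ((i3.add i4).const_mul _)) ?_
      filter_upwards [ae_restrict_mem measurableSet_Ioc] with s hs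
      obtain ⟨hs0, hsn⟩ := hs
      rw [max_eq_left (by linarith)]
      set g := |f s| * (1 + s)⁻¹ with hg
      have hg0 : 0 ≤ g := by positivity
      have hfg : |f s| = g * (1 + s) := by rw [hg]; field_simp
      have y1 : g ≤ ε + (ε ^ (p-1))⁻¹ * h s := aux_young g ε hg0 hε p (by omega)
      have y2 : g ^ 2 ≤ 1 + h s := aux_sq g hg0 p hp
      have hE : Real.exp (-α * (n - s)) = Real.exp (-α * n) * Real.exp (α * s) := by
        rw [← Real.exp_add]; ring_nf
      have a1 : (1 + s) / n ≤ 2 := by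
        rw [div_le_iff₀ (by linarith)]; linarith
      have a2 : (1 + s) ^ 2 / n ≤ (1 + n) ^ 2 := by
        rw [div_le_iff₀ (by linarith)]
        calc (1 + s) ^ 2 ≤ (1 + n:ℝ) ^ 2 := by gcongr
          _ ≤ _ := le_mul_of_one_le_right (by positivity) hn1
      calc Real.exp (-α * n) / n * |f s * x s|
          ≤ Real.exp (-α * n) / n * (|f s| * (C * Real.exp (α * s) + |f s|)) := by
            rw [abs_mul]; gcongr; exact hx s hs0
        _ = C * (Real.exp (-α * n) * Real.exp (α * s)) * ((1 + s) / n) * g +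
            Real.exp (-α * n) * ((1 + s) ^ 2 / n) * g ^ 2 := by rw [hfg]; ring
        _ ≤ C * (Real.exp (-α * n) * Real.exp (α * s)) * 2 * (ε + (ε ^ (p-1))⁻¹ * h s) +
            Real.exp (-α * n) * ((1 + n) ^ 2) * (1 + h s) := by gcongr
        _ = _ := by rw [hE]; ring
    refine step.trans ?_
    have e := integral_add (μ := volume.restrict (Set.Ioc (0:ℝ) n))
      ((i1.const_mul (2 * C * ε)).add (i2.const_mul (2 * C * (ε ^ (p-1))⁻¹)))
          ((i3.add i4).const_mul (Real.exp (-α * n) * (1 + n) ^ 2))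
    simp only [Pi.add_apply] at e
    rw [e, integral_add (i1.const_mul _) (i2.const_mul _), integral_const_mul, integral_const_mul,
      integral_const_mul, integral_add i3 i4]
    have m3 : ∫ s in Set.Ioc (0:ℝ) n, (1:ℝ) = n := by simp
    rw [m3]
    gcongr
  have hnn : ∀ n : ℕ, 0 ≤ Real.exp (-α * n) / n * ∫ s in (0:ℝ)..(n:ℝ), |f s * x s| := fun n =>
    mul_nonneg (by positivity) (intervalIntegral.integral_nonneg (by positivity)
      fun _ _ => abs_nonneg _)
  rw [Metric.tendsto_atTop']
  intro δ hδ
  set ε := δ * α / (4 * C) with hεd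
  have hε : 0 < ε := by positivity
  have lim := ((aux_conv α hα h hi).const_mul (2 * C * (ε ^ (p-1))⁻¹)).add (aux_poly α hα G)
  simp only [mul_zero, add_zero] at lim
  have ev := (lim.eventually (gt_mem_nhds (show 0 < δ / 2 by positivity))).and (eventually_ge_atTop 1)
  obtain ⟨N, hN⟩ := eventually_atTop.1 ev
  refine ⟨N, fun n hn => ?_⟩
  obtain ⟨h1, h2⟩ := hN n hn.le
  rw [Real.dist_eq, sub_zero, abs_of_nonneg (hnn n)]
  have h3 := bound ε hε n h2
  have h4 : 2 * C * ε * (1 / α) = δ / 2 := by rw [hεd]; field_simp; norm_num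
  linarith


/-- Almost surely, as the integer `n → ∞`,
`(e^{-α n} / n) ∫_0^n |B_s X_s| ds → 0`. -/
theorem stmt_17 {Ω : Type*} [MeasurableSpace Ω] (P : Measure Ω) [IsProbabilityMeasure P]
    (H : ℝ) (hH1 : 1 / 2 ≤ H) (hH2 : H < 1)
    (B : ℝ → Ω → ℝ)
    (hBmeas : ∀ t : ℝ, Measurable (B t))
    (hBgauss : ∀ (m : ℕ) (t : Fin m → ℝ) (c : Fin m → ℝ), (∀ i, 0 ≤ t i) →
      ∃ v : NNReal, Measure.map (fun ω => ∑ i, c i * B (t i) ω) P = gaussianReal 0 v)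
    (hB0 : ∀ ω, B 0 ω = 0)
    (hBcov : ∀ s t : ℝ, 0 ≤ s → 0 ≤ t →
      ∫ ω, B s ω * B t ω ∂P = 1 / 2 * (s ^ (2 * H) + t ^ (2 * H) - |t - s| ^ (2 * H)))
    (hBcont : ∀ᵐ ω ∂P, ContinuousOn (fun t => B t ω) (Set.Ici (0 : ℝ)))
    (α : ℝ) (hα : 0 < α)
    (Z : ℝ → Ω → ℝ)
    (hZ : ∀ (t : ℝ) (ω : Ω), Z t ω = ∫ s in (0:ℝ)..t, Real.exp (-α * s) * B s ω)
    (Zinf : Ω → ℝ)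
    (hZinf : ∀ ω : Ω, Zinf ω = ∫ s in Set.Ioi (0:ℝ), Real.exp (-α * s) * B s ω)
    (L : ℝ → ℝ)
    (hLmeas : Measurable L) (hLbdd : ∃ M : ℝ, ∀ t : ℝ, |L t| ≤ M)
    (hLper : ∀ t : ℝ, L (t + 1) = L t)
    (A : ℝ → ℝ) (hA : ∀ t : ℝ, A t = ∫ s in (0:ℝ)..t, Real.exp (-α * s) * L s)
    (Ainf : ℝ) (hAinf : Ainf = A 1 / (1 - Real.exp (-α)))
    (X : ℝ → Ω → ℝ)
    (hX : ∀ (t : ℝ) (ω : Ω), X t ω = Real.exp (α * t) * A t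
        + α * Real.exp (α * t) * Z t ω + B t ω) :
    ∀ᵐ ω ∂P, Tendsto (fun n : ℕ => Real.exp (-α * n) / n *
        ∫ s in (0:ℝ)..(n:ℝ), |B s ω * X s ω|)
      atTop (nhds 0) := by
  obtain ⟨M, hM⟩ := hLbdd
  obtain ⟨p, hp2, hpH⟩ : ∃ p : ℕ, 2 ≤ p ∧ 2 ≤ (p:ℝ) * (1 - H) := by
    have h1 : 0 < 1 - H := by linarith
    obtain ⟨k, hk⟩ := exists_nat_ge (2 / (1 - H))
    rw [div_le_iff₀ h1] at hk
    refine ⟨k + 2, by omega, ?_⟩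
    push_cast
    nlinarith
  obtain ⟨C, hC0, hC⟩ := aux_exp α hα
  filter_upwards [aux_prob P H hH1 B hBmeas hBgauss hBcov hBcont p hp2 hpH] with ω hω
  have hM0 : 0 ≤ M := (abs_nonneg _).trans (hM 0)
  have hAb : ∀ t, 0 ≤ t → |A t| ≤ ∫ s in Set.Ioi (0:ℝ), Real.exp (-α * s) * M := by
    intro t ht
    rw [hA t]
    refine aux_bdd _ _ ((exp_neg_integrableOn_Ioi 0 hα).mul_const M) (fun s _ => ?_) t ht
    rw [abs_mul, abs_of_pos (Real.exp_pos _)]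
    gcongr
    exact hM s
  have hZb : ∀ t, 0 ≤ t → |Z t ω| ≤ ∫ s in Set.Ioi (0:ℝ), (C * Real.exp (-(α/2) * s) +
      C * (|B s ω| * (1 + s)⁻¹) ^ p) := by
    intro t ht
    rw [hZ t]
    refine aux_bdd _ _ (((exp_neg_integrableOn_Ioi 0 (half_pos hα)).const_mul C).add
      (hω.const_mul C)) (fun s hs => ?_) t ht
    rw [abs_mul, abs_of_pos (Real.exp_pos _)]
    obtain ⟨c1, c2⟩ := hC s hs.le
    have y := aux_young (|B s ω| * (1 + s)⁻¹) 1 (by positivity) one_pos p (by omega)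
    rw [one_pow, inv_one, one_mul] at y
    have h0 : 0 ≤ (|B s ω| * (1 + s)⁻¹) ^ p := by positivity
    calc Real.exp (-α * s) * |B s ω|
        = Real.exp (-α * s) * (1 + s) * (|B s ω| * (1 + s)⁻¹) := by field_simp
      _ ≤ Real.exp (-α * s) * (1 + s) * (1 + (|B s ω| * (1 + s)⁻¹) ^ p) := by gcongr
      _ = Real.exp (-α * s) * (1 + s) +
          Real.exp (-α * s) * (1 + s) * (|B s ω| * (1 + s)⁻¹) ^ p := by ring
      _ ≤ C * Real.exp (-(α/2) * s) + C * (|B s ω| * (1 + s)⁻¹) ^ p := by gcongr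
  set a := ∫ s in Set.Ioi (0:ℝ), Real.exp (-α * s) * M
  set z := ∫ s in Set.Ioi (0:ℝ), (C * Real.exp (-(α/2) * s) +
      C * (|B s ω| * (1 + s)⁻¹) ^ p)
  have ha0 : 0 ≤ a := (abs_nonneg _).trans (hAb 0 le_rfl)
  have hz0 : 0 ≤ z := (abs_nonneg _).trans (hZb 0 le_rfl)
  refine aux_det_s17 α hα (fun s => B s ω) (fun s => X s ω) p hp2 hω (a + α * z + 1) (by positivity) ?_
  intro s hs
  have h1 := hAb s hs.le
  have h2 := hZb s hs.le
  have hE := Real.exp_pos (α * s)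
  simp only [hX s ω]
  calc |Real.exp (α * s) * A s + α * Real.exp (α * s) * Z s ω + B s ω|
      ≤ |Real.exp (α * s) * A s| + |α * Real.exp (α * s) * Z s ω| + |B s ω| := abs_add_three _ _ _
    _ = Real.exp (α * s) * |A s| + α * Real.exp (α * s) * |Z s ω| + |B s ω| := by
        rw [abs_mul, abs_mul, abs_of_pos hE, abs_of_pos (mul_pos hα hE)]
    _ ≤ Real.exp (α * s) * a + α * Real.exp (α * s) * z + |B s ω| := by gcongr
    _ ≤ (a + α * z + 1) * Real.exp (α * s) + |B s ω| := by nlinarith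
end
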